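/- Let K ⊆ ℝⁿ be a closed set, let x ∈ Kᶜ and let q : ℝⁿ → (0, ∞) be a measurable, strictly positive function. If A ⊆ ℝⁿ is a measurable set such that A ∩ Kᶜ has positive Lebesgue measure, then Q_K(x, A) > 0. -/

import Mathlib

open MeasureTheory

noncomputable def ell {n : ℕ} (K : Set (EuclideanSpace ℝ (Fin n)))
    (x φ : EuclideanSpace ℝ (Fin n)) (r : ℝ) : ℝ :=
  ∫ t in (0:ℝ)..r, Set.indicator Kᶜ (fun _ => (1:ℝ)) (x + t • φ)

open Classical in
noncomputable def ghost {n : ℕ} (K : Set (EuclideanSpace ℝ (Fin n)))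
    (q : EuclideanSpace ℝ (Fin n) → ℝ)
    (x y : EuclideanSpace ℝ (Fin n)) : ℝ :=
  if y = x then q 0
  else
    q ((ell K x (‖y - x‖⁻¹ • (y - x)) ‖y - x‖) • (‖y - x‖⁻¹ • (y - x)))
      * (ell K x (‖y - x‖⁻¹ • (y - x)) ‖y - x‖ / ‖y - x‖) ^ (n - 1)
      * Set.indicator Kᶜ (fun _ => (1:ℝ)) y

/-!
Near `x` every ray from `x` runs outside `K`, so the length it spends there is positive as soon as
`r > 0`. Hence the ghost density is strictly positive on all of `Kᶜ`, and a measurable function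
which is positive on a set of positive measure has positive integral there.
-/

section IntervalIntegral

open Filter Topology

lemma intervalIntegral_pos_of_eventually_nhdsGT_pos {μ : Measure ℝ} [μ.IsOpenPosMeasure]
    {f : ℝ → ℝ} {a b : ℝ} (hf : 0 ≤ᵐ[μ] f) (hfi : IntervalIntegrable f μ a b)
    (hpos : ∀ᶠ t in 𝓝[>] a, 0 < f t) (hab : a < b) : 0 < ∫ t in a..b, f t ∂μ := by
  rw [intervalIntegral.integral_pos_iff_support_of_nonneg_ae hf hfi]
  refine ⟨hab, ?_⟩
  obtain ⟨c, hac : a < c, hc⟩ :=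
    mem_nhdsGT_iff_exists_Ioo_subset.1 (hpos.and (Ioc_mem_nhdsGT hab))
  calc
    0 < μ (Set.Ioo a c) := isOpen_Ioo.measure_pos μ (Set.nonempty_Ioo.2 hac)
    _ ≤ μ (Function.support f ∩ Set.Ioc a b) :=
      measure_mono fun t ht => ⟨(hc ht).1.ne', (hc ht).2⟩

lemma stronglyMeasurable_intervalIntegral {α E : Type*} [MeasurableSpace α]
    [NormedAddCommGroup E] [NormedSpace ℝ E] {μ : Measure ℝ} [SFinite μ]
    {f : α → ℝ → E} {a b : α → ℝ} (hf : StronglyMeasurable (Function.uncurry f))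
    (ha : Measurable a) (hb : Measurable b) :
    StronglyMeasurable fun x => ∫ t in a x..b x, f x t ∂μ := by
  have integral_Ioc {c d : α → ℝ} (hc : Measurable c) (hd : Measurable d) :
      StronglyMeasurable fun x => ∫ t in Set.Ioc (c x) (d x), f x t ∂μ := by
    have hS : MeasurableSet {p : α × ℝ | p.2 ∈ Set.Ioc (c p.1) (d p.1)} :=
      (measurableSet_lt (hc.comp measurable_fst) measurable_snd).inter
        (measurableSet_le measurable_snd (hd.comp measurable_fst))
    simp only [← integral_indicator measurableSet_Ioc]
    exact (hf.indicator hS).integral_prod_right'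
  exact (integral_Ioc ha hb).sub (integral_Ioc hb ha)

end IntervalIntegral

section Ghost

open Topology

variable {n : ℕ} {K : Set (EuclideanSpace ℝ (Fin n))}
  {q : EuclideanSpace ℝ (Fin n) → ℝ} {x y : EuclideanSpace ℝ (Fin n)}

lemma measurable_ell {α : Type*} [MeasurableSpace α] (hK : MeasurableSet K)
    {x φ : α → EuclideanSpace ℝ (Fin n)} {r : α → ℝ} (hx : Measurable x) (hφ : Measurable φ)
    (hr : Measurable r) : Measurable fun a => ell K (x a) (φ a) (r a) := by
  have hf : Measurable fun p : α × ℝ =>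
      Set.indicator Kᶜ (fun _ => (1 : ℝ)) (x p.1 + p.2 • φ p.1) :=
    (measurable_const.indicator hK.compl).comp (by fun_prop)
  exact (stronglyMeasurable_intervalIntegral hf.stronglyMeasurable measurable_const hr).measurable

lemma ell_pos (hK : MeasurableSet K) (hx : Kᶜ ∈ 𝓝 x) (φ : EuclideanSpace ℝ (Fin n)) {r : ℝ}
    (hr : 0 < r) : 0 < ell K x φ r := by
  have hmeas : Measurable fun t : ℝ => Set.indicator Kᶜ (fun _ => (1 : ℝ)) (x + t • φ) :=
    (measurable_const.indicator hK.compl).comp (by fun_prop)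
  have hray : ∀ᶠ t : ℝ in 𝓝 0, x + t • φ ∈ Kᶜ :=
    (by fun_prop : Continuous fun t : ℝ => x + t • φ).tendsto' 0 x (by simp) hx
  refine intervalIntegral_pos_of_eventually_nhdsGT_pos ?nonneg ?integrable ?pos hr
  case nonneg => exact .of_forall fun t => Set.indicator_nonneg (fun _ _ => zero_le_one) _
  case integrable =>
    exact (intervalIntegrable_const (c := (1 : ℝ))).mono_fun hmeas.aestronglyMeasurable
      (.of_forall fun t => norm_indicator_le_norm_self _ _)
  case pos =>
    filter_upwards [hray.filter_mono nhdsWithin_le_nhds] with t ht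
    simp only [Set.indicator_of_mem ht, zero_lt_one]

lemma measurable_ghost (hK : MeasurableSet K) (hq : Measurable q) :
    Measurable (Function.uncurry (ghost K q)) := by
  let E := EuclideanSpace ℝ (Fin n)
  have hdir : Measurable fun p : E × E => ‖p.2 - p.1‖⁻¹ • (p.2 - p.1) := by fun_prop
  have hnorm : Measurable fun p : E × E => ‖p.2 - p.1‖ := by fun_prop
  have hell := measurable_ell hK measurable_fst hdir hnorm
  exact .ite (measurableSet_eq_fun measurable_snd measurable_fst) measurable_const <|
    ((hq.comp (hell.smul hdir)).mul ((hell.div hnorm).pow_const _)).mul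
      ((measurable_const.indicator hK.compl).comp measurable_snd)

lemma ghost_pos (hK : MeasurableSet K) (hx : Kᶜ ∈ 𝓝 x) (hq : ∀ z, 0 < q z) (hy : y ∈ Kᶜ) :
    0 < ghost K q x y := by
  unfold ghost
  split_ifs with hyx
  · exact hq 0
  · have hr : 0 < ‖y - x‖ := norm_pos_iff.2 (sub_ne_zero.2 hyx)
    rw [Set.indicator_of_mem hy, mul_one]
    exact mul_pos (hq _) (pow_pos (div_pos (ell_pos hK hx _ hr) hr) _)

theorem ghost_kernel_pos_general (hK : MeasurableSet K) (hx : Kᶜ ∈ 𝓝 x) (hqm : Measurable q)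
    (hqpos : ∀ z, 0 < q z) {A : Set (EuclideanSpace ℝ (Fin n))} (hAK : 0 < volume (A ∩ Kᶜ)) :
    0 < ∫⁻ y in A, ENNReal.ofReal (ghost K q x y) := by
  have hghost : Measurable (ghost K q x) := (measurable_ghost hK hqm).of_uncurry_left
  rw [setLIntegral_pos_iff hghost.ennreal_ofReal]
  refine hAK.trans_le (measure_mono fun y ⟨hyA, hyK⟩ => ⟨?_, hyA⟩)
  exact (ENNReal.ofReal_pos.2 (ghost_pos hK hx hqpos hyK)).ne'

end Ghost

theorem ghost_kernel_pos {n : ℕ} (K : Set (EuclideanSpace ℝ (Fin n)))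
    (hK : IsClosed K) (x : EuclideanSpace ℝ (Fin n)) (hx : x ∈ Kᶜ)
    (q : EuclideanSpace ℝ (Fin n) → ℝ) (hqm : Measurable q) (hqpos : ∀ z, 0 < q z)
    (A : Set (EuclideanSpace ℝ (Fin n))) (hA : MeasurableSet A)
    (hAK : 0 < volume (A ∩ Kᶜ)) :
    0 < ∫⁻ y in A, ENNReal.ofReal (ghost K q x y) ∂volume :=
  ghost_kernel_pos_general hK.measurableSet (hK.isOpen_compl.mem_nhds hx) hqm hqpos hAK
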